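/- Let G be a DAG on [d] with a C¹ conditional-density family (p_i), perfect intervened strictly positive C¹ densities p̃_k on every node k ∈ [d] giving interventional joints p^k (and unintervened p^0), and let f : ℝ^d → ℝ^d be a C¹ diffeomorphism. For each k ∈ [d], prescribe a probability distribution M_k on ℝ with continuous strictly positive density, to be matched either by the intervened mechanism of node k or — only if pa(k) = ∅ — alternatively by the observational mechanism of node k (at most one prescription per node k). Then there exist T ∈ S_scaling and a second model consisting of a strictly positive conditional-density family (q_i) for G with perfect intervened densities q̃_k and interventional joints q^k, such that, with f′ := f ∘ T⁻¹: f_*P^k = f′_*Q^k for every k ∈ {0,…,d}; f′⁻¹∘f = T ∈ S_scaling; and every prescribed mechanism is attained, i.e., the measure with density q̃_k equals M_k for each node where the intervened mechanism was prescribed, and the measure with density q_k equals M_k for each root node where the observational mechanism was prescribed. -/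

import Mathlib

/-!
Rewriting the model in new latent coordinates `z`, with the old ones `S(z)` for a scaling `S`,
multiplies the `i`-th mechanism by the Jacobian factor `|dSᵢ/dzᵢ|`. This factor keeps the mechanism
a conditional density for the same graph, and since the Jacobian of `S` is diagonal, the product of
the factors accounts exactly for the change of variables in every joint density, observational or
interventional. So every scaling yields an equivalent model, and its components are free to be
chosen. Taking `Sᵢ = F⁻¹ ∘ G`, with `F` the distribution function of the mechanism to be fixed and
`G` that of the prescribed distribution, turns the former into the latter.
-/

open MeasureTheory

noncomputable section

/-- `f` depends only on the coordinates in `S`. -/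
def DependsOnlyOn {d : ℕ} {α : Type*} (f : (Fin d → ℝ) → α) (S : Finset (Fin d)) : Prop :=
  ∀ z w : Fin d → ℝ, (∀ i ∈ S, z i = w i) → f z = f w

/-- `f` is a C¹ diffeomorphism between (real) normed spaces. -/
def IsC1Diffeo {E F : Type*} [NormedAddCommGroup E] [NormedSpace ℝ E]
    [NormedAddCommGroup F] [NormedSpace ℝ F] (f : E → F) : Prop :=
  ContDiff ℝ 1 f ∧ ∃ g : F → E, ContDiff ℝ 1 g ∧
    Function.LeftInverse g f ∧ Function.RightInverse g f

/-- The measure on `ℝ^d` with density `ρ` with respect to Lebesgue measure. -/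
def densityMeasure {d : ℕ} (ρ : (Fin d → ℝ) → ℝ) : Measure (Fin d → ℝ) :=
  volume.withDensity fun z => ENNReal.ofReal (ρ z)

/-- The measure on `ℝ` with density `r` with respect to Lebesgue measure. -/
def densityMeasure₁ (r : ℝ → ℝ) : Measure ℝ :=
  volume.withDensity fun x => ENNReal.ofReal (r x)

/-- Membership in `S_scaling`: the map acts by an elementwise C¹ diffeomorphism of `ℝ`
on each coordinate. -/
def InSScaling {d : ℕ} (h : (Fin d → ℝ) → (Fin d → ℝ)) : Prop :=
  ∃ hs : Fin d → ℝ → ℝ, (∀ i, IsC1Diffeo (hs i)) ∧ ∀ (z : Fin d → ℝ) (i : Fin d), h z i = hs i (z i)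

/-- Membership in `S_reparam`: a coordinate permutation composed with an element of
`S_scaling`. -/
def InSReparam {d : ℕ} (g : (Fin d → ℝ) → (Fin d → ℝ)) : Prop :=
  ∃ (σ : Equiv.Perm (Fin d)) (hs : Fin d → ℝ → ℝ),
    (∀ i, IsC1Diffeo (hs i)) ∧ ∀ (z : Fin d → ℝ) (i : Fin d), g z i = hs (σ i) (z (σ i))

/-- A C¹ conditional-density family for the DAG on `Fin d` with parent map `pa`:
each `p i` is strictly positive, C¹, depends only on the coordinates `{i} ∪ pa i`,
and integrates to `1` in the `i`-th coordinate. -/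
def IsCondFamily {d : ℕ} (pa : Fin d → Finset (Fin d))
    (p : Fin d → (Fin d → ℝ) → ℝ) : Prop :=
  ∀ i, (∀ z, 0 < p i z) ∧ ContDiff ℝ 1 (p i) ∧
    DependsOnlyOn (p i) (insert i (pa i)) ∧
    ∀ z, (∫ t : ℝ, p i (Function.update z i t)) = 1

/-- A strictly positive C¹ probability density on `ℝ`. -/
def IsC1Density (r : ℝ → ℝ) : Prop :=
  (∀ x, 0 < r x) ∧ ContDiff ℝ 1 r ∧ (∫ x : ℝ, r x) = 1

/-- The joint density `z ↦ ∏ i, p i z` of a conditional-density family. -/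
def jointDensity {d : ℕ} (p : Fin d → (Fin d → ℝ) → ℝ) : (Fin d → ℝ) → ℝ :=
  fun z => ∏ i, p i z

/-- `j` is an ancestor of `i` in the DAG with parent map `pa` (transitive closure of the
parent relation). -/
def IsAnc {d : ℕ} (pa : Fin d → Finset (Fin d)) (j i : Fin d) : Prop :=
  Relation.TransGen (fun a b => a ∈ pa b) j i

open ProbabilityTheory Filter Topology

section Calculus

theorem exists_orderIso_comp_eq_of_range_eq {α β γ : Type*} [LinearOrder α] [LinearOrder β]
    [Preorder γ] {F : β → γ} {G : α → γ} (hF : StrictMono F) (hG : StrictMono G)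
    (h : Set.range F = Set.range G) : ∃ S : α ≃o β, F ∘ S = G := by
  let S := ((hG.orderIso G).trans (OrderIso.setCongr _ _ h.symm)).trans (hF.orderIso F).symm
  refine ⟨S, funext fun x => ?_⟩
  exact congrArg Subtype.val
    ((hF.orderIso F).apply_symm_apply (OrderIso.setCongr _ _ h.symm (hG.orderIso G x)))

theorem range_eq_Ioo_of_strictMono_of_tendsto {α β : Type*} [LinearOrder α] [Nonempty α]
    [NoMinOrder α] [NoMaxOrder α] [TopologicalSpace α] [PreconnectedSpace α] [LinearOrder β]
    [TopologicalSpace β] [OrderTopology β] {f : α → β} {a b : β} (hmono : StrictMono f)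
    (hcont : Continuous f) (ha : Tendsto f atBot (𝓝 a)) (hb : Tendsto f atTop (𝓝 b)) :
    Set.range f = Set.Ioo a b := by
  refine Set.Subset.antisymm (Set.range_subset_iff.2 fun x => ?_) fun c hc => ?_
  · obtain ⟨y, hyx⟩ := exists_lt x
    obtain ⟨z, hxz⟩ := exists_gt x
    exact ⟨(hmono.monotone.le_of_tendsto ha y).trans_lt (hmono hyx),
      (hmono hxz).trans_le (hmono.monotone.ge_of_tendsto hb z)⟩
  · obtain ⟨y, hy⟩ := (ha.eventually_lt_const hc.1).exists
    obtain ⟨z, hz⟩ := (hb.eventually_const_lt hc.2).exists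
    exact mem_range_of_exists_le_of_exists_ge hcont ⟨y, hy.le⟩ ⟨z, hz.le⟩

theorem hasDerivAt_setIntegral_Iic {E : Type*} [NormedAddCommGroup E] [NormedSpace ℝ E]
    [CompleteSpace E] {r : ℝ → E} {x : ℝ} (hr : Integrable r) (hx : ContinuousAt r x) :
    HasDerivAt (fun u => ∫ t in Set.Iic u, r t) (r x) x := by
  have hsplit (u : ℝ) :
      ∫ t in Set.Iic u, r t = (∫ t in Set.Iic x, r t) + ∫ t in x..u, r t := by
    rw [← intervalIntegral.integral_Iic_sub_Iic hr.integrableOn hr.integrableOn,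
      add_sub_cancel]
  rw [funext hsplit]
  exact (intervalIntegral.integral_hasDerivAt_right hr.intervalIntegrable
    hr.aestronglyMeasurable.stronglyMeasurableAtFilter hx).const_add _

end Calculus

section ChangeOfVariables

theorem map_withDensity_abs_det_fderiv_mul_comp {E : Type*} [NormedAddCommGroup E]
    [NormedSpace ℝ E] [FiniteDimensional ℝ E] [MeasurableSpace E] [BorelSpace E] (μ : Measure E)
    [μ.IsAddHaarMeasure] {f : E → E} {f' : E → E →L[ℝ] E} (hf' : ∀ x, HasFDerivAt f (f' x) x)
    (hf : Function.Bijective f) (ρ : E → ENNReal) :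
    (μ.withDensity fun x => ENNReal.ofReal |(f' x).det| * ρ (f x)).map f = μ.withDensity ρ := by
  have hmeas : Measurable f :=
    (continuous_iff_continuousAt.2 fun x => (hf' x).continuousAt).measurable
  ext s hs
  rw [Measure.map_apply hmeas hs, withDensity_apply _ (hmeas hs), withDensity_apply _ hs,
    ← lintegral_image_eq_lintegral_abs_det_fderiv_mul μ (hmeas hs)
      (fun x _ => (hf' x).hasFDerivWithinAt) hf.injective.injOn,
    Set.image_preimage_eq s hf.surjective]

theorem map_piMap_withDensity_prod_abs_deriv_mul_comp {ι : Type*} [Fintype ι] {S : ι → ℝ → ℝ}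
    (hS : ∀ i, Differentiable ℝ (S i)) (hbij : ∀ i, Function.Bijective (S i))
    (ρ : (ι → ℝ) → ENNReal) :
    (volume.withDensity fun z : ι → ℝ =>
        ENNReal.ofReal (∏ i, |deriv (S i) (z i)|) * ρ (Pi.map S z)).map (Pi.map S) =
      volume.withDensity ρ := by
  let J (z : ι → ℝ) : (ι → ℝ) →L[ℝ] (ι → ℝ) := ContinuousLinearMap.pi fun i =>
    (ContinuousLinearMap.toSpanSingleton ℝ (deriv (S i) (z i))).comp
      (ContinuousLinearMap.proj (φ := fun _ : ι => ℝ) i)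
  have hJ (z : ι → ℝ) : HasFDerivAt (Pi.map S) (J z) z :=
    hasFDerivAt_pi.2 fun i =>
      (hS i (z i)).hasDerivAt.hasFDerivAt.comp z (hasFDerivAt_apply i z)
  have hdet (z : ι → ℝ) : |(J z).det| = ∏ i, |deriv (S i) (z i)| := by
    simp only [J, ContinuousLinearMap.det_pi, ContinuousLinearMap.det_toSpanSingleton,
      Finset.abs_prod]
  simpa only [hdet] using map_withDensity_abs_det_fderiv_mul_comp volume hJ
    ⟨Pi.map_injective.2 fun i => (hbij i).injective,
      Function.Surjective.piMap fun i => (hbij i).surjective⟩ ρ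

end ChangeOfVariables

namespace IsC1Diffeo

variable {E F : Type*} [NormedAddCommGroup E] [NormedSpace ℝ E] [NormedAddCommGroup F]
  [NormedSpace ℝ F]

theorem bijective {f : E → F} (hf : IsC1Diffeo f) : Function.Bijective f :=
  let ⟨_, _, hleft, hright⟩ := hf.2
  ⟨hleft.injective, hright.surjective⟩

theorem symm {e : E ≃ F} (he : IsC1Diffeo e) : IsC1Diffeo e.symm := by
  obtain ⟨hcont, g, hg, hleft, -⟩ := he
  have : g = e.symm := funext fun y => by simpa using hleft (e.symm y)
  exact ⟨this ▸ hg, e, hcont, e.right_inv, e.left_inv⟩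

theorem differentiable {f : E → F} (hf : IsC1Diffeo f) : Differentiable ℝ f :=
  hf.1.differentiable one_ne_zero

theorem deriv_ne_zero {S : ℝ → ℝ} (hS : IsC1Diffeo S) (x : ℝ) : deriv S x ≠ 0 := by
  obtain ⟨g, hg, hleft, -⟩ := hS.2
  have hchain : HasDerivAt (g ∘ S) (deriv g (S x) * deriv S x) x :=
    (hg.differentiable one_ne_zero _).hasDerivAt.comp x (hS.differentiable x).hasDerivAt
  rw [hleft.comp_eq_id] at hchain
  exact right_ne_zero_of_mul_eq_one (hchain.unique (hasDerivAt_id x))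

end IsC1Diffeo

section Densities

/-- A strictly positive continuous probability density on `ℝ`; unlike `IsC1Density` it covers the
prescribed distributions. A non-integrable `r` is excluded, its integral being `0` by convention. -/
structure IsContinuousDensity (r : ℝ → ℝ) : Prop where
  continuous : Continuous r
  pos : ∀ x, 0 < r x
  integral_eq_one : ∫ x, r x = 1

/-- The density, in the coordinate `x`, of the distribution whose density in the coordinate `S x`
is `r`. The absolute value allows for decreasing `S`. -/
def pullbackDensity (S r : ℝ → ℝ) : ℝ → ℝ :=
  fun x => r (S x) * |deriv S x|

theorem IsC1Density.isContinuousDensity {r : ℝ → ℝ} (hr : IsC1Density r) :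
    IsContinuousDensity r :=
  ⟨hr.2.1.continuous, hr.1, hr.2.2⟩

theorem integral_pullbackDensity {S : ℝ → ℝ} (hS : Differentiable ℝ S)
    (hbij : Function.Bijective S) (r : ℝ → ℝ) : ∫ x, pullbackDensity S r x = ∫ x, r x := by
  have h := integral_image_eq_integral_abs_deriv_smul MeasurableSet.univ
    (fun x _ => (hS x).hasDerivAt.hasDerivWithinAt) hbij.injective.injOn r
  rw [Set.image_univ, hbij.surjective.range_eq] at h
  simpa only [pullbackDensity, Measure.restrict_univ, smul_eq_mul, mul_comm] using h.symm

namespace IsContinuousDensity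

variable {r m : ℝ → ℝ}

theorem integrable (hr : IsContinuousDensity r) : Integrable r :=
  integrable_of_integral_eq_one hr.integral_eq_one

theorem isProbabilityMeasure (hr : IsContinuousDensity r) :
    IsProbabilityMeasure (densityMeasure₁ r) := by
  constructor
  rw [densityMeasure₁, withDensity_apply _ MeasurableSet.univ, Measure.restrict_univ,
    ← ofReal_integral_eq_lintegral_ofReal hr.integrable (ae_of_all _ fun x => (hr.pos x).le),
    hr.integral_eq_one, ENNReal.ofReal_one]

theorem cdf_densityMeasure₁ (hr : IsContinuousDensity r) (x : ℝ) :
    cdf (densityMeasure₁ r) x = ∫ t in Set.Iic x, r t := by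
  have := hr.isProbabilityMeasure
  rw [cdf_eq_real, Measure.real, densityMeasure₁, withDensity_apply _ measurableSet_Iic,
    integral_eq_lintegral_of_nonneg_ae (ae_of_all _ fun t => (hr.pos t).le)
      hr.continuous.aestronglyMeasurable]

theorem hasDerivAt_cdf (hr : IsContinuousDensity r) (x : ℝ) :
    HasDerivAt (cdf (densityMeasure₁ r)) (r x) x := by
  rw [funext hr.cdf_densityMeasure₁]
  exact hasDerivAt_setIntegral_Iic hr.integrable hr.continuous.continuousAt

theorem strictMono_cdf (hr : IsContinuousDensity r) : StrictMono (cdf (densityMeasure₁ r)) :=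
  strictMono_of_hasDerivAt_pos hr.hasDerivAt_cdf hr.pos

theorem range_cdf (hr : IsContinuousDensity r) :
    Set.range (cdf (densityMeasure₁ r)) = Set.Ioo 0 1 :=
  range_eq_Ioo_of_strictMono_of_tendsto hr.strictMono_cdf
    (continuous_iff_continuousAt.2 fun x => (hr.hasDerivAt_cdf x).continuousAt)
    (tendsto_cdf_atBot _) (tendsto_cdf_atTop _)

theorem pullback (hr : IsContinuousDensity r) {S : ℝ → ℝ} (hS : IsC1Diffeo S) :
    IsContinuousDensity (pullbackDensity S r) where
  continuous := (hr.continuous.comp hS.1.continuous).mul (hS.1.continuous_deriv le_rfl).abs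
  pos x := mul_pos (hr.pos _) (abs_pos.2 (hS.deriv_ne_zero x))
  integral_eq_one := by
    rw [integral_pullbackDensity hS.differentiable hS.bijective, hr.integral_eq_one]

theorem exists_orderIso_pullbackDensity_eq (hr : IsContinuousDensity r)
    (hm : IsContinuousDensity m) :
    ∃ S : ℝ ≃o ℝ, IsC1Diffeo S ∧ pullbackDensity S r = m := by
  obtain ⟨S, hS⟩ := exists_orderIso_comp_eq_of_range_eq hr.strictMono_cdf hm.strictMono_cdf
    (hr.range_cdf.trans hm.range_cdf.symm)
  have hpos (x : ℝ) : 0 < m x / r (S x) := div_pos (hm.pos x) (hr.pos _)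
  have hderiv (x : ℝ) : HasDerivAt S (m x / r (S x)) x :=
    .of_comp_left S.continuous.continuousAt (hr.hasDerivAt_cdf _) (hm.hasDerivAt_cdf x)
      (hr.pos _).ne' hS.eventuallyEq
  have hderiv_eq : deriv S = fun x => m x / r (S x) := funext fun x => (hderiv x).deriv
  have hC1 : ContDiff ℝ 1 S := by
    refine contDiff_one_iff_deriv.2 ⟨fun x => (hderiv x).differentiableAt, ?_⟩
    rw [hderiv_eq]
    exact hm.continuous.div (hr.continuous.comp S.continuous) fun x => (hr.pos _).ne'
  have hC1_symm : ContDiff ℝ 1 S.symm :=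
    S.toHomeomorph.contDiff_symm_deriv (fun x => (hpos x).ne') hderiv hC1
  refine ⟨S, ⟨hC1, S.symm, hC1_symm, S.symm_apply_apply, S.apply_symm_apply⟩, funext fun x => ?_⟩
  rw [pullbackDensity, hderiv_eq, abs_of_pos (hpos x), mul_div_cancel₀ _ (hr.pos _).ne']

theorem exists_orderIso_pullbackDensity_eq_of_not_and {s : ℝ → ℝ} {P Q : Prop}
    (hPQ : ¬(P ∧ Q)) (hr : IsContinuousDensity r) (hs : IsContinuousDensity s)
    (hm : P ∨ Q → IsContinuousDensity m) :
    ∃ S : ℝ ≃o ℝ, IsC1Diffeo S ∧ (P → pullbackDensity S r = m) ∧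
      (Q → pullbackDensity S s = m) := by
  by_cases hP : P
  · obtain ⟨S, hS, hSr⟩ := hr.exists_orderIso_pullbackDensity_eq (hm (.inl hP))
    exact ⟨S, hS, fun _ => hSr, fun hQ => (hPQ ⟨hP, hQ⟩).elim⟩
  by_cases hQ : Q
  · obtain ⟨S, hS, hSs⟩ := hs.exists_orderIso_pullbackDensity_eq (hm (.inr hQ))
    exact ⟨S, hS, fun h => (hP h).elim, fun _ => hSs⟩
  · exact ⟨.refl ℝ, ⟨contDiff_id, id, contDiff_id, fun _ => rfl, fun _ => rfl⟩,
      fun h => (hP h).elim, fun h => (hQ h).elim⟩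

end IsContinuousDensity

end Densities

section Models

variable {d : ℕ} {S : Fin d → ℝ → ℝ} {i : Fin d}

/-- A strictly positive continuous conditional density of node `i` given the nodes in `s`, as a
function of all coordinates; `IsCondFamily` asks this of each node, with `C¹` for continuity. -/
structure IsContinuousMechanism (p : (Fin d → ℝ) → ℝ) (i : Fin d) (s : Finset (Fin d)) :
    Prop where
  pos : ∀ z, 0 < p z
  continuous : Continuous p
  dependsOnlyOn : DependsOnlyOn p (insert i s)
  integral_update : ∀ z, ∫ t, p (Function.update z i t) = 1

/-- The mechanism `p` of node `i` in the latent coordinates `z`, when `p` is given in the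
coordinates `Pi.map S z`; only the `i`-th Jacobian factor is attributed to node `i`. -/
def pullbackMechanism (S : Fin d → ℝ → ℝ) (i : Fin d) (p : (Fin d → ℝ) → ℝ) :
    (Fin d → ℝ) → ℝ :=
  fun z => p (Pi.map S z) * |deriv (S i) (z i)|

/-- The joint density after a perfect intervention that gives node `k` the density `r`. -/
def interventionalDensity (p : Fin d → (Fin d → ℝ) → ℝ) (k : Fin d) (r : ℝ → ℝ) :
    (Fin d → ℝ) → ℝ :=
  fun z => r (z k) * ∏ i ∈ ({k} : Finset (Fin d))ᶜ, p i z

theorem IsCondFamily.isContinuousMechanism {pa : Fin d → Finset (Fin d)}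
    {p : Fin d → (Fin d → ℝ) → ℝ} (hp : IsCondFamily pa p) (i : Fin d) :
    IsContinuousMechanism (p i) i (pa i) :=
  let ⟨hpos, hC1, hdep, hint⟩ := hp i
  ⟨hpos, hC1.continuous, hdep, hint⟩

theorem DependsOnlyOn.apply_update_eq {α : Type*} {g : (Fin d → ℝ) → α}
    (hg : DependsOnlyOn g {i}) (z w : Fin d → ℝ) (t : ℝ) :
    g (Function.update z i t) = g (Function.update w i t) :=
  hg _ _ fun j hj => by rw [Finset.mem_singleton.1 hj, Function.update_self, Function.update_self]

theorem pullbackMechanism_update (S : Fin d → ℝ → ℝ) (p : (Fin d → ℝ) → ℝ) (z : Fin d → ℝ)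
    (i : Fin d) (t : ℝ) :
    pullbackMechanism S i p (Function.update z i t) =
      pullbackDensity (S i) (fun u => p (Function.update (Pi.map S z) i u)) t := by
  rw [pullbackMechanism, Pi.map_update, Function.update_self, pullbackDensity]

namespace IsContinuousMechanism

variable {p : (Fin d → ℝ) → ℝ} {s : Finset (Fin d)}

theorem isContinuousDensity (hp : IsContinuousMechanism p i s) (z : Fin d → ℝ) :
    IsContinuousDensity fun t => p (Function.update z i t) where
  continuous := hp.continuous.comp (continuous_const.update i continuous_id)
  pos _ := hp.pos _
  integral_eq_one := hp.integral_update z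

theorem pullback (hp : IsContinuousMechanism p i s) (hS : ∀ j, IsC1Diffeo (S j)) :
    IsContinuousMechanism (pullbackMechanism S i p) i s where
  pos z := mul_pos (hp.pos _) (abs_pos.2 ((hS i).deriv_ne_zero _))
  continuous :=
    (hp.continuous.comp (.piMap fun j => (hS j).1.continuous)).mul
      (((hS i).1.continuous_deriv le_rfl).comp (continuous_apply i)).abs
  dependsOnlyOn z w hzw := by
    have hp_eq : p (Pi.map S z) = p (Pi.map S w) :=
      hp.dependsOnlyOn _ _ fun j hj => congrArg (S j) (hzw j hj)
    rw [pullbackMechanism, pullbackMechanism, hp_eq, hzw i (Finset.mem_insert_self _ _)]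
  integral_update z := by
    simp only [pullbackMechanism_update]
    exact ((hp.isContinuousDensity _).pullback (hS i)).integral_eq_one

end IsContinuousMechanism

theorem map_piMap_jointDensity_pullbackMechanism (hS : ∀ i, IsC1Diffeo (S i))
    (p : Fin d → (Fin d → ℝ) → ℝ) :
    (densityMeasure (jointDensity fun i => pullbackMechanism S i (p i))).map (Pi.map S) =
      densityMeasure (jointDensity p) := by
  have hdensity (z : Fin d → ℝ) :
      ENNReal.ofReal (jointDensity (fun i => pullbackMechanism S i (p i)) z) =
        ENNReal.ofReal (∏ i, |deriv (S i) (z i)|) *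
          ENNReal.ofReal (jointDensity p (Pi.map S z)) := by
    rw [← ENNReal.ofReal_mul (Finset.prod_nonneg fun i _ => abs_nonneg _), mul_comm]
    simp only [jointDensity, pullbackMechanism, Finset.prod_mul_distrib]
  simp only [densityMeasure, hdensity]
  exact map_piMap_withDensity_prod_abs_deriv_mul_comp (fun i => (hS i).differentiable)
    (fun i => (hS i).bijective) fun z => ENNReal.ofReal (jointDensity p z)

theorem interventionalDensity_eq_jointDensity_update (p : Fin d → (Fin d → ℝ) → ℝ) (k : Fin d)
    (r : ℝ → ℝ) :
    interventionalDensity p k r = jointDensity (Function.update p k fun z => r (z k)) := by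
  funext z
  rw [interventionalDensity, jointDensity, Fintype.prod_eq_mul_prod_compl k, Function.update_self]
  refine congrArg (r (z k) * ·) (Finset.prod_congr rfl fun i hi => ?_)
  rw [Function.update_of_ne (by simpa using hi)]

theorem map_piMap_interventionalDensity_pullbackMechanism (hS : ∀ i, IsC1Diffeo (S i))
    (p : Fin d → (Fin d → ℝ) → ℝ) (k : Fin d) (r : ℝ → ℝ) :
    (densityMeasure (interventionalDensity (fun i => pullbackMechanism S i (p i)) k
        (pullbackDensity (S k) r))).map (Pi.map S) =
      densityMeasure (interventionalDensity p k r) := by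
  have hupdate : (Function.update (fun i => pullbackMechanism S i (p i)) k
      fun z => pullbackDensity (S k) r (z k)) =
        fun i => pullbackMechanism S i (Function.update p k (fun z => r (z k)) i) := by
    funext i
    obtain rfl | hik := eq_or_ne i k
    · simp only [Function.update_self]
      rfl
    · simp only [Function.update_of_ne hik]
  rw [interventionalDensity_eq_jointDensity_update, interventionalDensity_eq_jointDensity_update,
    hupdate, map_piMap_jointDensity_pullbackMechanism hS]

theorem inSScaling_piMap (hS : ∀ i, IsC1Diffeo (S i)) : InSScaling (Pi.map S) :=
  ⟨S, hS, fun _ _ => rfl⟩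

end Models

theorem cauca_expressivity_fix_mechanisms_general {d : ℕ} {Y : Type*} [MeasurableSpace Y]
    (pa : Fin d → Finset (Fin d))
    (p : Fin d → (Fin d → ℝ) → ℝ) (hp : ∀ i, IsContinuousMechanism (p i) i (pa i))
    (pt : Fin d → ℝ → ℝ) (hpt : ∀ k, IsContinuousDensity (pt k))
    (f : (Fin d → ℝ) → Y) (hf : Measurable f)
    (prescInt prescObs : Finset (Fin d)) (hdisj : Disjoint prescInt prescObs)
    (hroot : ∀ k ∈ prescObs, pa k = ∅)
    (M : Fin d → ℝ → ℝ) (hM : ∀ k ∈ prescInt ∪ prescObs, IsContinuousDensity (M k)) :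
    ∃ (T Tinv : (Fin d → ℝ) → (Fin d → ℝ))
      (q : Fin d → (Fin d → ℝ) → ℝ) (qt : Fin d → ℝ → ℝ),
      InSScaling T ∧
      Function.LeftInverse Tinv T ∧ Function.RightInverse Tinv T ∧
      (∀ i, IsContinuousMechanism (q i) i (pa i)) ∧
      (∀ k, IsContinuousDensity (qt k)) ∧
      (densityMeasure (jointDensity p)).map f =
        (densityMeasure (jointDensity q)).map (f ∘ Tinv) ∧
      (∀ k, (densityMeasure (interventionalDensity p k (pt k))).map f =
        (densityMeasure (interventionalDensity q k (qt k))).map (f ∘ Tinv)) ∧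
      (∀ z, (f ∘ Tinv) (T z) = f z) ∧
      (∀ k ∈ prescInt, qt k = M k) ∧
      (∀ k ∈ prescObs, ∀ z, (fun t => q k (Function.update z k t)) = M k) := by
  choose S hS hInt hObs using fun k =>
    IsContinuousDensity.exists_orderIso_pullbackDensity_eq_of_not_and
      (fun h => Finset.disjoint_left.1 hdisj h.1 h.2 : ¬(k ∈ prescInt ∧ k ∈ prescObs))
      (hpt k) ((hp k).isContinuousDensity 0) (fun h => hM k (Finset.mem_union.2 h))
  have hmeas : Measurable (Pi.map fun i => S i) :=
    (Continuous.piMap fun i => (S i).continuous).measurable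
  have hinv (z : Fin d → ℝ) : Pi.map (fun i => S i) (Pi.map (fun i => (S i).symm) z) = z :=
    funext fun i => (S i).apply_symm_apply (z i)
  refine ⟨Pi.map fun i => (S i).symm, Pi.map fun i => S i,
    fun i => pullbackMechanism (fun j => S j) i (p i), fun k => pullbackDensity (S k) (pt k),
    inSScaling_piMap fun i => (hS i).symm (e := (S i).toEquiv), hinv,
    fun z => funext fun i => (S i).symm_apply_apply (z i), fun i => (hp i).pullback hS,
    fun k => (hpt k).pullback (hS k), ?_, fun k => ?_, fun z => congrArg f (hinv z), hInt,
    fun k hk z => ?_⟩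
  · rw [← Measure.map_map hf hmeas, map_piMap_jointDensity_pullbackMechanism hS]
  · rw [← Measure.map_map hf hmeas, map_piMap_interventionalDensity_pullbackMechanism hS]
  · have hdep : DependsOnlyOn (p k) {k} := by simpa [hroot k hk] using (hp k).dependsOnlyOn
    simp only [pullbackMechanism_update, hdep.apply_update_eq _ 0]
    exact hObs k hk

/-- **Proposition (expressivity: prescribed mechanisms).** Given a latent CBN over the DAG
with parent map `pa`, with conditional-density family `p`, perfect stochastic interventions
`pt k` on every node `k`, and a C¹ diffeomorphic mixing function `f`. For each node `k`,
prescribe at most one distribution `M k` (with continuous strictly positive density) to be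
matched either by the intervened mechanism of node `k` (nodes in `prescInt`) or — only for
root nodes — by the observational mechanism of node `k` (nodes in `prescObs`). Then there
exist `T ∈ S_scaling` (with inverse `Tinv`) and a second model `(q, qt)` over the same DAG
such that, with `f′ := f ∘ Tinv`: the pushforwards match in every regime, the transition map
`f′⁻¹ ∘ f` is `T ∈ S_scaling`, and every prescribed mechanism is attained. -/
theorem cauca_expressivity_fix_mechanisms {d : ℕ}
    (pa : Fin d → Finset (Fin d))
    (hpa : ∀ i : Fin d, ∀ j ∈ pa i, j < i)
    (p : Fin d → (Fin d → ℝ) → ℝ) (hp : IsCondFamily pa p)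
    (pt : Fin d → ℝ → ℝ) (hpt : ∀ k, IsC1Density (pt k))
    (f : (Fin d → ℝ) → (Fin d → ℝ)) (hf : IsC1Diffeo f)
    (prescInt prescObs : Finset (Fin d))
    (hdisj : Disjoint prescInt prescObs)
    (hroot : ∀ k ∈ prescObs, pa k = ∅)
    (M : Fin d → ℝ → ℝ)
    (hM : ∀ k ∈ prescInt ∪ prescObs,
      Continuous (M k) ∧ (∀ x, 0 < M k x) ∧ (∫ x : ℝ, M k x) = 1) :
    ∃ (T Tinv : (Fin d → ℝ) → (Fin d → ℝ))
      (q : Fin d → (Fin d → ℝ) → ℝ) (qt : Fin d → ℝ → ℝ),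
      InSScaling T ∧
      Function.LeftInverse Tinv T ∧ Function.RightInverse Tinv T ∧
      (∀ i : Fin d, (∀ z, 0 < q i z) ∧ DependsOnlyOn (q i) (insert i (pa i)) ∧
        ∀ z, (∫ t : ℝ, q i (Function.update z i t)) = 1) ∧
      (∀ k : Fin d, (∀ x, 0 < qt k x) ∧ (∫ x : ℝ, qt k x) = 1) ∧
      Measure.map f (densityMeasure (jointDensity p)) =
        Measure.map (f ∘ Tinv) (densityMeasure (jointDensity q)) ∧
      (∀ k : Fin d,
        Measure.map f (densityMeasure fun z =>
            pt k (z k) * ∏ i ∈ ({k} : Finset (Fin d))ᶜ, p i z) =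
        Measure.map (f ∘ Tinv) (densityMeasure fun z =>
            qt k (z k) * ∏ i ∈ ({k} : Finset (Fin d))ᶜ, q i z)) ∧
      (∀ z : Fin d → ℝ, (f ∘ Tinv) (T z) = f z) ∧
      (∀ k ∈ prescInt, densityMeasure₁ (qt k) = densityMeasure₁ (M k)) ∧
      (∀ k ∈ prescObs, ∀ z : Fin d → ℝ,
        densityMeasure₁ (fun t => q k (Function.update z k t)) =
          densityMeasure₁ (M k)) := by
  obtain ⟨T, Tinv, q, qt, hT, hl, hr, hq, hqt, hobs, hint, hf', hI, hO⟩ :=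
    cauca_expressivity_fix_mechanisms_general pa p hp.isContinuousMechanism pt
      (fun k => (hpt k).isContinuousDensity) f hf.1.continuous.measurable prescInt prescObs hdisj
      hroot M fun k hk => ⟨(hM k hk).1, (hM k hk).2.1, (hM k hk).2.2⟩
  exact ⟨T, Tinv, q, qt, hT, hl, hr,
    fun i => ⟨(hq i).pos, (hq i).dependsOnlyOn, (hq i).integral_update⟩,
    fun k => ⟨(hqt k).pos, (hqt k).integral_eq_one⟩, hobs, hint, hf',
    fun k hk => congrArg densityMeasure₁ (hI k hk),
    fun k hk z => congrArg densityMeasure₁ (hO k hk z)⟩
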